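/- Cut reduction for GL nested sequents: if Γ{A} and Γ{A⊥} both have cut-free derivations in the nested sequent calculus for GL, then Γ{·} has a cut-free derivation. The proof is by lexicographic induction on (size of A, sum of the heights of the two derivations), using diagonal-formula elimination for the principal ◇/□ case. -/

import Mathlib

/-- Formulas of GL in negation normal form. -/
inductive Formula : Type where
  | pos : ℕ → Formula
  | neg : ℕ → Formula
  | and : Formula → Formula → Formula
  | or  : Formula → Formula → Formula
  | box : Formula → Formula
  | dia : Formula → Formula
deriving DecidableEq

/-- Negation `A⊥` of a formula, via De Morgan duality. -/
def Formula.negate : Formula → Formula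
  | .pos a => .neg a
  | .neg a => .pos a
  | .and A B => .or A.negate B.negate
  | .or A B => .and A.negate B.negate
  | .box A => .dia A.negate
  | .dia A => .box A.negate

/-- An element of a nested sequent: a formula or a nested (bracketed) sequent. -/
inductive SeqElem : Type where
  | fml : Formula → SeqElem
  | nest : List SeqElem → SeqElem

/-- A nested sequent. -/
abbrev Sequent := List SeqElem

/-- Unary contexts: a nested sequent with a single hole. -/
inductive Ctx : Type where
  | hole : Sequent → Ctx
  | nest : Sequent → Ctx → Ctx

/-- Fill the hole of a context with a sequent. -/
def Ctx.fill : Ctx → Sequent → Sequent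
  | .hole Δ, Γ => Δ ++ Γ
  | .nest Δ c, Γ => .nest (c.fill Γ) :: Δ

/-- Depth of a context: number of brackets surrounding the hole. -/
def Ctx.depth : Ctx → ℕ
  | .hole _ => 0
  | .nest _ c => c.depth + 1

/-- Equivalence of nested sequents up to (deep) exchange. -/
inductive SeqEquiv : Sequent → Sequent → Prop where
  | nil : SeqEquiv [] []
  | cons {e : SeqElem} {Γ Δ : Sequent} : SeqEquiv Γ Δ → SeqEquiv (e :: Γ) (e :: Δ)
  | consNest {Γ' Δ' Γ Δ : Sequent} :
      SeqEquiv Γ' Δ' → SeqEquiv Γ Δ → SeqEquiv (.nest Γ' :: Γ) (.nest Δ' :: Δ)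
  | swap (a b : SeqElem) (Γ : Sequent) : SeqEquiv (a :: b :: Γ) (b :: a :: Γ)
  | trans {Γ Δ Θ : Sequent} : SeqEquiv Γ Δ → SeqEquiv Δ Θ → SeqEquiv Γ Θ

/-- `DerivH n Γ`: `Γ` has a cut-free derivation of height at most `n`. -/
inductive DerivH : ℕ → Sequent → Prop where
  | id (n : ℕ) (c : Ctx) (a : ℕ) :
      DerivH n (c.fill [.fml (.pos a), .fml (.neg a)])
  | and {n : ℕ} {c : Ctx} {A B : Formula} :
      DerivH n (c.fill [.fml A]) → DerivH n (c.fill [.fml B]) →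
      DerivH (n + 1) (c.fill [.fml (.and A B)])
  | or {n : ℕ} {c : Ctx} {A B : Formula} :
      DerivH n (c.fill [.fml A, .fml B]) →
      DerivH (n + 1) (c.fill [.fml (.or A B)])
  | box {n : ℕ} {c : Ctx} {A : Formula} :
      DerivH n (c.fill [.nest [.fml (.dia A.negate), .fml A]]) →
      DerivH (n + 1) (c.fill [.fml (.box A)])
  | dia {n : ℕ} (c d : Ctx) {A : Formula} :
      0 < d.depth →
      DerivH n (c.fill (d.fill [.fml A] ++ [.fml (.dia A)])) →
      DerivH (n + 1) (c.fill (d.fill [] ++ [.fml (.dia A)]))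
  | exch {n : ℕ} {Γ Δ : Sequent} : SeqEquiv Γ Δ → DerivH n Γ → DerivH n Δ
  | up {n : ℕ} {Γ : Sequent} : DerivH n Γ → DerivH (n + 1) Γ

/-- Derivability where cut is permitted on formulas satisfying `P`. -/
inductive DerivWith (P : Formula → Prop) : Sequent → Prop where
  | id (c : Ctx) (a : ℕ) :
      DerivWith P (c.fill [.fml (.pos a), .fml (.neg a)])
  | and {c : Ctx} {A B : Formula} :
      DerivWith P (c.fill [.fml A]) → DerivWith P (c.fill [.fml B]) →
      DerivWith P (c.fill [.fml (.and A B)])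
  | or {c : Ctx} {A B : Formula} :
      DerivWith P (c.fill [.fml A, .fml B]) →
      DerivWith P (c.fill [.fml (.or A B)])
  | box {c : Ctx} {A : Formula} :
      DerivWith P (c.fill [.nest [.fml (.dia A.negate), .fml A]]) →
      DerivWith P (c.fill [.fml (.box A)])
  | dia (c d : Ctx) {A : Formula} :
      0 < d.depth →
      DerivWith P (c.fill (d.fill [.fml A] ++ [.fml (.dia A)])) →
      DerivWith P (c.fill (d.fill [] ++ [.fml (.dia A)]))
  | cut {c : Ctx} {A : Formula} : P A →
      DerivWith P (c.fill [.fml A]) → DerivWith P (c.fill [.fml A.negate]) →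
      DerivWith P (c.fill [])
  | exch {Γ Δ : Sequent} : SeqEquiv Γ Δ → DerivWith P Γ → DerivWith P Δ

/-- Cut-free derivability. -/
abbrev Deriv : Sequent → Prop := DerivWith (fun _ => False)

/-! ### Exchange and derived rules with side formulas -/

namespace SeqEquiv

theorem refl : ∀ Γ : Sequent, SeqEquiv Γ Γ
  | [] => .nil
  | _ :: Γ => .cons (refl Γ)

theorem symm {Γ Δ : Sequent} (h : SeqEquiv Γ Δ) : SeqEquiv Δ Γ := by
  induction h with
  | nil => exact .nil
  | cons _ ih => exact .cons ih
  | consNest _ _ ih₁ ih₂ => exact .consNest ih₁ ih₂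
  | swap a b Γ => exact .swap b a Γ
  | trans _ _ ih₁ ih₂ => exact .trans ih₂ ih₁

theorem of_perm {Γ Δ : Sequent} (h : Γ.Perm Δ) : SeqEquiv Γ Δ := by
  induction h with
  | nil => exact .nil
  | cons _ _ ih => exact .cons ih
  | swap a b Γ => exact .swap b a Γ
  | trans _ _ ih₁ ih₂ => exact .trans ih₁ ih₂

theorem append_left (Θ : Sequent) {Γ Δ : Sequent} (h : SeqEquiv Γ Δ) :
    SeqEquiv (Θ ++ Γ) (Θ ++ Δ) := by
  induction Θ with
  | nil => exact h
  | cons _ _ ih => exact .cons ih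

theorem append_right (Θ : Sequent) {Γ Δ : Sequent} (h : SeqEquiv Γ Δ) :
    SeqEquiv (Γ ++ Θ) (Δ ++ Θ) :=
  (of_perm List.perm_append_comm).trans
    ((h.append_left Θ).trans (of_perm List.perm_append_comm))

theorem fill (c : Ctx) {Γ Δ : Sequent} (h : SeqEquiv Γ Δ) :
    SeqEquiv (c.fill Γ) (c.fill Δ) := by
  induction c with
  | hole Θ => exact h.append_left Θ
  | nest Θ c ih => exact .consNest ih (refl Θ)

end SeqEquiv

namespace Ctx

/-- Add side elements next to the hole. -/
def add (Θ : Sequent) : Ctx → Ctx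
  | .hole Δ => .hole (Δ ++ Θ)
  | .nest Δ c => .nest Δ (c.add Θ)

/-- Replace the hole by a bracket containing the new hole, with side elements next to it. -/
def push (Θ : Sequent) : Ctx → Ctx
  | .hole Δ => .nest (Θ ++ Δ) (.hole [])
  | .nest Δ c => .nest Δ (c.push Θ)

/-- `◇A` occurs at a proper ancestor of the hole. -/
def DiaAbove (A : Formula) : Ctx → Prop
  | .hole _ => False
  | .nest Δ c => .fml (.dia A) ∈ Δ ∨ c.DiaAbove A

theorem add_fill (c : Ctx) (Θ Γ : Sequent) :
    SeqEquiv ((c.add Θ).fill Γ) (c.fill (Γ ++ Θ)) := by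
  induction c with
  | hole Δ =>
    refine .of_perm ?_
    simp only [add, Ctx.fill, List.append_assoc]
    exact List.perm_append_comm.append_left Δ
  | nest Δ c ih => exact .consNest ih (.refl Δ)

theorem add_depth (c : Ctx) (Θ : Sequent) : (c.add Θ).depth = c.depth := by
  induction c with
  | hole Δ => rfl
  | nest Δ c ih => simp [add, depth, ih]

theorem push_fill (c : Ctx) (Θ Γ : Sequent) :
    SeqEquiv ((c.push Θ).fill Γ) (c.fill (.nest Γ :: Θ)) := by
  induction c with
  | hole Δ =>
    refine .of_perm ?_
    simp only [push, Ctx.fill, List.nil_append]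
    exact (List.perm_append_comm (l₁ := .nest Γ :: Θ) (l₂ := Δ))
  | nest Δ c ih => exact .consNest ih (.refl Δ)

theorem DiaAbove.push {c : Ctx} {A : Formula} (Θ : Sequent) (h : c.DiaAbove A) :
    (c.push Θ).DiaAbove A := by
  induction c with
  | hole Δ => exact h.elim
  | nest Δ c ih => exact h.imp id ih

theorem diaAbove_push_of_mem (c : Ctx) {A : Formula} {Θ : Sequent}
    (h : SeqElem.fml (.dia A) ∈ Θ) : (c.push Θ).DiaAbove A := by
  induction c with
  | hole Δ => exact .inl (List.mem_append_left _ h)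
  | nest Δ c ih => exact .inr ih

theorem DiaAbove.exists_fill {c : Ctx} {A : Formula} (h : c.DiaAbove A) :
    ∃ c₀ d : Ctx, 0 < d.depth ∧
      ∀ Γ, SeqEquiv (c.fill Γ) (c₀.fill (d.fill Γ ++ [.fml (.dia A)])) := by
  induction c with
  | hole Δ => exact h.elim
  | nest Δ c ih =>
    rcases h with h | h
    · obtain ⟨s, t, rfl⟩ := List.append_of_mem h
      refine ⟨.hole [], .nest (s ++ t) c, Nat.succ_pos _, fun Γ => .of_perm ?_⟩
      simp only [Ctx.fill, List.nil_append, List.cons_append]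
      exact (List.perm_middle.trans (List.perm_append_singleton _ _).symm).cons _
    · obtain ⟨c₀, d, hd, hfill⟩ := ih h
      exact ⟨.nest Δ c₀, d, hd, fun Γ => .consNest (hfill Γ) (.refl Δ)⟩

end Ctx

theorem Formula.negate_negate (A : Formula) : A.negate.negate = A := by
  induction A <;> simp_all [Formula.negate]

namespace DerivWith

variable {P : Formula → Prop} {c : Ctx} {A B : Formula} {Γ Δ Θ : Sequent}

theorem fill_equiv (h : SeqEquiv Γ Δ) (hd : DerivWith P (c.fill Γ)) :
    DerivWith P (c.fill Δ) :=
  .exch (h.fill c) hd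

theorem fill_perm (h : Γ.Perm Δ) (hd : DerivWith P (c.fill Γ)) : DerivWith P (c.fill Δ) :=
  hd.fill_equiv (.of_perm h)

theorem id_cons (a : ℕ) :
    DerivWith P (c.fill (.fml (.pos a) :: .fml (.neg a) :: Γ)) :=
  .exch (c.add_fill Γ _) (.id _ a)

theorem and_cons (h₁ : DerivWith P (c.fill (.fml A :: Γ)))
    (h₂ : DerivWith P (c.fill (.fml B :: Γ))) :
    DerivWith P (c.fill (.fml (.and A B) :: Γ)) :=
  .exch (c.add_fill Γ _) (.and (.exch (c.add_fill Γ [_]).symm h₁)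
    (.exch (c.add_fill Γ [_]).symm h₂))

theorem or_cons (h : DerivWith P (c.fill (.fml A :: .fml B :: Γ))) :
    DerivWith P (c.fill (.fml (.or A B) :: Γ)) :=
  .exch (c.add_fill Γ _) (.or (.exch (c.add_fill Γ [_, _]).symm h))

theorem box_cons
    (h : DerivWith P (c.fill (.nest [.fml (.dia A.negate), .fml A] :: Γ))) :
    DerivWith P (c.fill (.fml (.box A) :: Γ)) :=
  .exch (c.add_fill Γ _) (.box (.exch (c.add_fill Γ [_]).symm h))

theorem of_diaAbove (hA : c.DiaAbove A) (h : DerivWith P (c.fill (.fml A :: Γ))) :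
    DerivWith P (c.fill Γ) := by
  obtain ⟨c₀, d, hd, hfill⟩ := hA.exists_fill
  have key (Δ : Sequent) :
      SeqEquiv (c.fill (Δ ++ Γ)) (c₀.fill ((d.add Γ).fill Δ ++ [.fml (.dia A)])) :=
    (hfill _).trans (((d.add_fill Γ Δ).symm.append_right _).fill c₀)
  exact .exch (key []).symm
    (.dia c₀ (d.add Γ) (by rwa [Ctx.add_depth]) (.exch (key [.fml A]) h))

theorem of_forall_diaAbove (S : List Formula) (hS : ∀ A ∈ S, c.DiaAbove A)
    (h : DerivWith P (c.fill (S.map .fml ++ Γ))) : DerivWith P (c.fill Γ) := by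
  induction S with
  | nil => exact h
  | cons A S ih =>
    exact ih (fun B hB => hS B (List.mem_cons_of_mem _ hB))
      (of_diaAbove (hS A List.mem_cons_self) h)

theorem box_dia_cons
    (ih : ∀ (c : Ctx) (Γ : Sequent), DerivWith P (c.fill (.fml A :: .fml A.negate :: Γ))) :
    DerivWith P (c.fill (.fml (.box A) :: .fml (.dia A.negate) :: Γ)) :=
  box_cons (.exch (c.push_fill _ _) (of_diaAbove
    (c.diaAbove_push_of_mem List.mem_cons_self)
    (fill_perm ((List.perm_append_comm (l₁ := [_, _]) (l₂ := [_])).trans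
      ((List.Perm.swap _ _ _).cons _) |>.trans (List.Perm.swap _ _ _)) (ih _ [.fml (.dia A.negate)]))))

/-- Generalized identity. -/
theorem id_formula (A : Formula) (c : Ctx) (Γ : Sequent) :
    DerivWith P (c.fill (.fml A :: .fml A.negate :: Γ)) := by
  induction A generalizing c Γ with
  | pos a => exact id_cons a
  | neg a => exact fill_perm (.swap _ _ _) (id_cons a)
  | and A B ihA ihB =>
    refine fill_perm (.swap _ _ _) (or_cons ?_)
    refine fill_perm ((List.Perm.swap _ _ _).trans ((List.Perm.swap _ _ _).cons _)) (and_cons ?_ ?_)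
    · exact ihA _ _
    · exact fill_perm ((List.Perm.swap _ _ _).cons _) (ihB c (.fml A.negate :: Γ))
  | or A B ihA ihB =>
    refine or_cons ?_
    refine fill_perm ((List.Perm.swap _ _ _).trans ((List.Perm.swap _ _ _).cons _)) (and_cons ?_ ?_)
    · exact fill_perm (.swap _ _ _) (ihA _ _)
    · exact fill_perm ((List.Perm.swap _ _ _).trans ((List.Perm.swap _ _ _).cons _))
        (ihB c (.fml A :: Γ))
  | box A ih => exact box_dia_cons ih
  | dia A ih =>
    refine fill_perm (.swap _ _ _) ?_
    have h := box_dia_cons (P := P) (A := A.negate) (c := c) (Γ := Γ) fun c Γ => by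
      rw [A.negate_negate]
      exact fill_perm (.swap _ _ _) (ih c Γ)
    rwa [A.negate_negate] at h

end DerivWith

/-! ### Semantics in well-founded trees -/

/-- Well-founded trees labelled with valuations; accessibility is the proper descendant
relation. -/
inductive KripkeTree : Type 1 where
  | node (v : ℕ → Prop) (ι : Type) (child : ι → KripkeTree) : KripkeTree

namespace KripkeTree

/-- `p` holds at all proper descendants. -/
def Below (p : KripkeTree → Prop) : KripkeTree → Prop
  | node _ _ f => ∀ i, p (f i) ∧ (f i).Below p

/-- The valuation at the root. -/
def val : KripkeTree → ℕ → Prop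
  | node v _ _ => v

variable {p q r : KripkeTree → Prop} {t : KripkeTree}

theorem below_of_forall (h : ∀ t, p t) (t : KripkeTree) : t.Below p := by
  induction t with
  | node v ι f ih => exact fun i => ⟨h _, ih i⟩

theorem Below.map₂ (h : ∀ t, p t → q t → r t) (hp : t.Below p) (hq : t.Below q) :
    t.Below r := by
  induction t with
  | node v ι f ih => exact fun i => ⟨h _ (hp i).1 (hq i).1, ih i (hp i).2 (hq i).2⟩

theorem Below.mono (h : ∀ t, p t → q t) (hp : t.Below p) : t.Below q :=
  hp.map₂ (fun t hp _ => h t hp) hp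

theorem Below.below (hp : t.Below p) : t.Below (Below p) := by
  induction t with
  | node v ι f ih => exact fun i => ⟨(hp i).2, ih i (hp i).2⟩

theorem Below.loeb (h : t.Below fun s => s.Below p → p s) : t.Below p := by
  induction t with
  | node v ι f ih => exact fun i => ⟨(h i).1 (ih i (h i).2), ih i (h i).2⟩

end KripkeTree

/-- Truth of a formula at the root of a tree. -/
def Formula.Eval : Formula → KripkeTree → Prop
  | .pos a, t => t.val a
  | .neg a, t => ¬ t.val a
  | .and A B, t => A.Eval t ∧ B.Eval t
  | .or A B, t => A.Eval t ∨ B.Eval t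
  | .box A, t => t.Below A.Eval
  | .dia A, t => ¬ t.Below fun s => ¬ A.Eval s

theorem Formula.eval_negate (A : Formula) (t : KripkeTree) :
    A.negate.Eval t ↔ ¬ A.Eval t := by
  induction A generalizing t with
  | pos a => rfl
  | neg a => simp [negate, Eval]
  | and A B ihA ihB => simp only [negate, Eval, ihA, ihB]; tauto
  | or A B ihA ihB => simp only [negate, Eval, ihA, ihB]; tauto
  | box A ih => simp only [negate, Eval, ih, not_not]
  | dia A ih => simp only [negate, Eval, not_not, (funext fun s => propext (ih s) :
      A.negate.Eval = fun s => ¬ A.Eval s)]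

mutual
/-- Truth of a sequent element, reading brackets as boxes. -/
def SeqElem.Eval : SeqElem → KripkeTree → Prop
  | .fml A, t => A.Eval t
  | .nest Γ, t => t.Below fun s => evalSeq Γ s
/-- Truth of a nested sequent, read disjunctively. -/
def evalSeq : List SeqElem → KripkeTree → Prop
  | [], _ => False
  | e :: Γ, t => e.Eval t ∨ evalSeq Γ t
end

theorem evalSeq_iff {Γ : Sequent} {t : KripkeTree} :
    evalSeq Γ t ↔ ∃ e ∈ Γ, e.Eval t := by
  induction Γ with
  | nil => simp [evalSeq]
  | cons e Γ ih => simp [evalSeq, ih]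

theorem evalSeq_append {Γ Δ : Sequent} {t : KripkeTree} :
    evalSeq (Γ ++ Δ) t ↔ evalSeq Γ t ∨ evalSeq Δ t := by
  simp only [evalSeq_iff, List.mem_append, or_and_right, exists_or]

theorem SeqEquiv.evalSeq {Γ Δ : Sequent} (h : SeqEquiv Γ Δ) {t : KripkeTree} :
    _root_.evalSeq Γ t → _root_.evalSeq Δ t := by
  induction h generalizing t with
  | nil => exact id
  | cons _ ih => exact Or.imp id ih
  | consNest _ _ ih₁ ih₂ =>
    simp only [_root_.evalSeq, SeqElem.Eval]
    exact Or.imp (KripkeTree.Below.mono fun _ => ih₁) ih₂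
  | swap a b Γ => simp only [_root_.evalSeq]; tauto
  | trans _ _ ih₁ ih₂ => exact ih₂ ∘ ih₁

theorem evalSeq_fill_of_forall (c : Ctx) {Γ : Sequent} (h : ∀ t, evalSeq Γ t)
    (t : KripkeTree) : evalSeq (c.fill Γ) t := by
  induction c generalizing t with
  | hole Δ => exact evalSeq_append.2 (.inr (h t))
  | nest Δ c ih =>
    simp only [Ctx.fill, evalSeq, SeqElem.Eval]
    exact .inl (KripkeTree.below_of_forall ih t)

theorem evalSeq_fill_map₂ (c : Ctx) {Γ Δ Θ : Sequent}
    (h : ∀ t, evalSeq Γ t → evalSeq Δ t → evalSeq Θ t) {t : KripkeTree}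
    (h₁ : evalSeq (c.fill Γ) t) (h₂ : evalSeq (c.fill Δ) t) : evalSeq (c.fill Θ) t := by
  induction c generalizing t with
  | hole Ξ =>
    simp only [Ctx.fill, evalSeq_append] at *
    have := h t
    tauto
  | nest Ξ c ih =>
    simp only [Ctx.fill, evalSeq, SeqElem.Eval] at *
    rcases h₁ with h₁ | h₁
    · rcases h₂ with h₂ | h₂
      · exact .inl (h₁.map₂ (fun _ => ih) h₂)
      · exact .inr h₂
    · exact .inr h₁

theorem evalSeq_fill_mono (c : Ctx) {Γ Δ : Sequent}
    (h : ∀ t, evalSeq Γ t → evalSeq Δ t) {t : KripkeTree}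
    (h₁ : evalSeq (c.fill Γ) t) : evalSeq (c.fill Δ) t :=
  evalSeq_fill_map₂ c (fun t h₁ _ => h t h₁) h₁ h₁

theorem evalSeq_fill_cut (c : Ctx) {A : Formula} {t : KripkeTree}
    (h₁ : evalSeq (c.fill [.fml A]) t) (h₂ : evalSeq (c.fill [.fml A.negate]) t) :
    evalSeq (c.fill []) t := by
  refine evalSeq_fill_map₂ c (fun t => ?_) h₁ h₂
  simp only [evalSeq, SeqElem.Eval, A.eval_negate]
  tauto

theorem evalSeq_fill_nil (d : Ctx) {A : Formula} {t : KripkeTree} (hA : ¬ A.Eval t)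
    (hb : t.Below fun s => ¬ A.Eval s) (h : evalSeq (d.fill [.fml A]) t) :
    evalSeq (d.fill []) t := by
  induction d generalizing t with
  | hole Δ =>
    simp only [Ctx.fill, evalSeq_append, evalSeq, SeqElem.Eval] at *
    tauto
  | nest Δ d ih =>
    simp only [Ctx.fill, evalSeq, SeqElem.Eval] at *
    refine h.imp (fun h => ?_) id
    exact (h.map₂ (r := fun s => ¬ A.Eval s → evalSeq (d.fill []) s)
      (fun s h hb hA => ih hA hb h) hb.below).map₂ (fun s h hA => h hA) hb

theorem evalSeq_dia {d : Ctx} (hd : 0 < d.depth) {A : Formula} {t : KripkeTree}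
    (h : evalSeq (d.fill [.fml A] ++ [.fml (.dia A)]) t) :
    evalSeq (d.fill [] ++ [.fml (.dia A)]) t := by
  by_cases hb : t.Below fun s => ¬ A.Eval s
  · rcases evalSeq_append.1 h with h | h
    · refine evalSeq_append.2 (.inl ?_)
      cases d with
      | hole Δ => simp [Ctx.depth] at hd
      | nest Δ d =>
        simp only [Ctx.fill, evalSeq, SeqElem.Eval] at *
        refine h.imp (fun h => ?_) id
        exact (h.map₂ (r := fun s => ¬ A.Eval s → evalSeq (d.fill []) s)
          (fun s h hb hA => evalSeq_fill_nil d hA hb h) hb.below).map₂ (fun s h hA => h hA) hb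
    · exact evalSeq_append.2 (.inr h)
  · refine evalSeq_append.2 (.inr ?_)
    simpa [evalSeq, SeqElem.Eval, Formula.Eval] using hb

theorem DerivWith.sound {P : Formula → Prop} {Γ : Sequent} (h : DerivWith P Γ)
    (t : KripkeTree) : evalSeq Γ t := by
  induction h generalizing t with
  | id c a =>
    refine evalSeq_fill_of_forall c (fun t => ?_) t
    simp only [evalSeq, SeqElem.Eval, Formula.Eval]
    tauto
  | @and c _ _ _ _ ih₁ ih₂ =>
    refine evalSeq_fill_map₂ c (fun t => ?_) (ih₁ t) (ih₂ t)
    simp only [evalSeq, SeqElem.Eval, Formula.Eval]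
    tauto
  | @or c _ _ _ ih =>
    refine evalSeq_fill_mono c (fun t => ?_) (ih t)
    simp only [evalSeq, SeqElem.Eval, Formula.Eval]
    tauto
  | @box c A _ ih =>
    refine evalSeq_fill_mono c (fun t => ?_) (ih t)
    simp only [evalSeq, SeqElem.Eval, Formula.Eval, or_false, A.eval_negate, not_not]
    refine fun h => KripkeTree.Below.loeb (h.mono fun s => ?_)
    tauto
  | dia c d hd _ ih => exact evalSeq_fill_mono c (fun t => evalSeq_dia hd) (ih t)
  | @cut c A _ _ _ ih₁ ih₂ => exact evalSeq_fill_cut c (ih₁ t) (ih₂ t)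
  | exch he _ ih => exact he.evalSeq (ih t)

/-! ### Cut-free completeness -/

/-- The sequent `Q, W` is derivable in every context, even after removing from `Q` those
diamonds which occur above the hole. -/
def StronglyDeriv (Q W : Sequent) : Prop :=
  ∀ (c : Ctx) (Θ : Sequent),
    (∀ e ∈ Q, e ∈ Θ ∨ ∃ A, e = .fml (.dia A) ∧ c.DiaAbove A) → Deriv (c.fill (W ++ Θ))

/-- The sequent has a countermodel. -/
def Refuted (Γ : Sequent) : Prop :=
  ∃ t : KripkeTree, ∀ e ∈ Γ, ¬ e.Eval t

/-- The formulas prefixed by a diamond at the root of a sequent. -/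
def diaBodies (Q : Sequent) : List Formula :=
  Q.filterMap fun
    | .fml (.dia A) => some A
    | _ => none

theorem mem_diaBodies {Q : Sequent} {A : Formula} :
    A ∈ diaBodies Q ↔ .fml (.dia A) ∈ Q := by
  simp only [diaBodies, List.mem_filterMap]
  constructor
  · rintro ⟨e, he, h⟩
    split at h <;> simp_all
  · exact fun h => ⟨_, h, rfl⟩

namespace StronglyDeriv

variable {Q W Δ : Sequent} {A B : Formula} {e : SeqElem}

theorem store (h : StronglyDeriv (e :: Q) W) : StronglyDeriv Q (e :: W) := by
  intro c Θ hΘ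
  refine (h c (e :: Θ) ?_).fill_perm List.perm_middle
  intro e' he'
  rcases List.mem_cons.1 he' with rfl | he'
  · exact .inl List.mem_cons_self
  · exact (hΘ e' he').imp (List.mem_cons_of_mem _) id

theorem and (h₁ : StronglyDeriv Q (.fml A :: W)) (h₂ : StronglyDeriv Q (.fml B :: W)) :
    StronglyDeriv Q (.fml (.and A B) :: W) :=
  fun c Θ hΘ => .and_cons (h₁ c Θ hΘ) (h₂ c Θ hΘ)

theorem or (h : StronglyDeriv Q (.fml A :: .fml B :: W)) :
    StronglyDeriv Q (.fml (.or A B) :: W) :=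
  fun c Θ hΘ => .or_cons (h c Θ hΘ)

theorem of_pos_neg {a : ℕ} (h₁ : .fml (.pos a) ∈ Q) (h₂ : .fml (.neg a) ∈ Q) :
    StronglyDeriv Q [] := by
  intro c Θ hΘ
  have h₁ : .fml (.pos a) ∈ Θ := by simpa using hΘ _ h₁
  have h₂ : .fml (.neg a) ∈ Θ := by simpa using hΘ _ h₂
  obtain ⟨s, u, rfl⟩ := List.append_of_mem h₁
  have h₂ : .fml (.neg a) ∈ s ++ u := by simpa using h₂
  obtain ⟨s', u', hs⟩ := List.append_of_mem h₂
  refine DerivWith.fill_perm ?_ (DerivWith.id_cons (Γ := s' ++ u') a)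
  refine List.Perm.trans ?_ List.perm_middle.symm
  rw [hs]
  exact List.perm_middle.symm.cons _

theorem of_mem_above {c : Ctx} {Θ Θ' : Sequent} {e : SeqElem}
    (hΘ : ∀ e ∈ Q, e ∈ Θ ∨ ∃ A, e = .fml (.dia A) ∧ c.DiaAbove A)
    (hp : Θ.Perm (e :: Θ')) (he : ∀ A, e ≠ .fml (.dia A)) (hA : .fml (.dia A) ∈ Q) :
    (c.push Θ').DiaAbove A := by
  rcases hΘ _ hA with h | ⟨B, h, hB⟩
  · refine c.diaAbove_push_of_mem ?_
    exact (List.mem_cons.1 (hp.mem_iff.1 h)).resolve_left (he A).symm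
  · cases h
    exact hB.push Θ'

theorem of_nest (hΔ : .nest Δ ∈ Q)
    (h : StronglyDeriv ((diaBodies Q).map fun A => .fml (.dia A))
      ((diaBodies Q).map .fml ++ Δ)) : StronglyDeriv Q [] := by
  intro c Θ hΘ
  have hmem : .nest Δ ∈ Θ := by simpa using hΘ _ hΔ
  obtain ⟨s, u, rfl⟩ := List.append_of_mem hmem
  have habove (A) (hA : A ∈ diaBodies Q) : (c.push (s ++ u)).DiaAbove A :=
    of_mem_above hΘ List.perm_middle (by simp) (mem_diaBodies.1 hA)
  refine DerivWith.fill_perm List.perm_middle.symm ?_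
  refine .exch (c.push_fill _ _) (.of_forall_diaAbove (diaBodies Q) habove ?_)
  have := h (c.push (s ++ u)) [] ?_
  · simpa using this
  · rintro e he
    obtain ⟨A, hA, rfl⟩ := List.mem_map.1 he
    exact .inr ⟨A, rfl, habove A hA⟩

theorem of_box (hA : .fml (.box A) ∈ Q)
    (h : StronglyDeriv (.fml (.dia A.negate) :: (diaBodies Q).map fun A => .fml (.dia A))
      ((diaBodies Q).map .fml ++ [.fml A])) : StronglyDeriv Q [] := by
  intro c Θ hΘ
  have hmem : .fml (.box A) ∈ Θ := by simpa using hΘ _ hA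
  obtain ⟨s, u, rfl⟩ := List.append_of_mem hmem
  have habove (B) (hB : B ∈ diaBodies Q) : (c.push (s ++ u)).DiaAbove B :=
    of_mem_above hΘ List.perm_middle (by simp) (mem_diaBodies.1 hB)
  refine DerivWith.fill_perm List.perm_middle.symm (.box_cons ?_)
  refine .exch (c.push_fill _ _) (.of_forall_diaAbove (diaBodies Q) habove ?_)
  have := h (c.push (s ++ u)) [.fml (.dia A.negate)] ?_
  · refine DerivWith.fill_perm ?_ this
    rw [List.append_assoc]
    exact (List.Perm.swap _ _ _).append_left _
  · rintro e he
    rcases List.mem_cons.1 he with rfl | he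
    · exact .inl List.mem_cons_self
    · obtain ⟨B, hB, rfl⟩ := List.mem_map.1 he
      exact .inr ⟨B, rfl, habove B hB⟩

theorem of_box_dia (h₁ : .fml (.box A) ∈ Q) (h₂ : .fml (.dia A.negate) ∈ Q) :
    StronglyDeriv Q [] := by
  refine of_box h₁ fun c Θ hΘ => ?_
  obtain ⟨s, u, hs⟩ := List.append_of_mem
    (List.mem_map_of_mem (f := SeqElem.fml) (mem_diaBodies.2 h₂))
  refine DerivWith.fill_perm ?_ (DerivWith.id_formula A c (s ++ u ++ Θ))
  rw [hs, ← List.cons_append, ← List.cons_append]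
  refine List.Perm.append_right _ ?_
  refine List.Perm.trans ?_ (List.perm_append_singleton _ _).symm
  exact List.perm_middle.symm.cons _

end StronglyDeriv

theorem Refuted.of_cons {Γ Δ Δ' : Sequent} (h : Refuted (Γ ++ Δ))
    (hΔ : ∀ t, (∀ e ∈ Δ, ¬ e.Eval t) → ∀ e ∈ Δ', ¬ e.Eval t) : Refuted (Γ ++ Δ') := by
  obtain ⟨t, ht⟩ := h
  refine ⟨t, fun e he => ?_⟩
  rcases List.mem_append.1 he with he | he
  · exact ht e (List.mem_append_left _ he)
  · exact hΔ t (fun e he => ht e (List.mem_append_right _ he)) e he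

namespace Formula

/-- Number of connectives and atoms. -/
def size : Formula → ℕ
  | .pos _ | .neg _ => 1
  | .and A B | .or A B => A.size + B.size + 1
  | .box A | .dia A => A.size + 1

theorem size_pos (A : Formula) : 0 < A.size := by
  cases A <;> simp [size]

/-- Bodies of the modal subformulas of a formula and of its negation. -/
def modalBodies : Formula → Finset Formula
  | .pos _ | .neg _ => ∅
  | .and A B | .or A B => A.modalBodies ∪ B.modalBodies
  | .box A | .dia A => {A, A.negate} ∪ A.modalBodies

theorem modalBodies_negate (A : Formula) : A.negate.modalBodies = A.modalBodies := by
  induction A with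
  | pos | neg => rfl
  | and A B ihA ihB | or A B ihA ihB => simp [negate, modalBodies, ihA, ihB]
  | box A ih | dia A ih =>
    simp only [negate, modalBodies, ih, negate_negate, Finset.pair_comm]

/-- The outermost connective is neither a conjunction nor a disjunction. -/
def Stable : Formula → Prop
  | .and _ _ | .or _ _ => False
  | _ => True

end Formula

/-- Weight of an element waiting to be decomposed. -/
def SeqElem.weight : SeqElem → ℕ
  | .fml A => A.size
  | .nest _ => 1

theorem SeqElem.weight_pos (e : SeqElem) : 0 < e.weight := by
  cases e with
  | fml A => exact A.size_pos
  | nest => exact Nat.one_pos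

theorem exists_modalBodies_subset (Γ : Sequent) :
    ∃ F : Finset Formula, ∀ A, .fml A ∈ Γ → A.modalBodies ⊆ F := by
  induction Γ with
  | nil => exact ⟨∅, by simp⟩
  | cons e Γ ih =>
    obtain ⟨F, hF⟩ := ih
    cases e with
    | nest Δ => exact ⟨F, fun A hA => hF A (by simpa using hA)⟩
    | fml B =>
      refine ⟨B.modalBodies ∪ F, fun A hA => ?_⟩
      rcases List.mem_cons.1 hA with h | h
      · cases h; exact Finset.subset_union_left
      · exact (hF A h).trans Finset.subset_union_right

/-- A sequent without propositional compounds is refutable as soon as its boxes and brackets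
are, in the presence of its diamonds. -/
theorem refuted_of_stable {Q : Sequent} (hQ : ∀ A, .fml A ∈ Q → A.Stable)
    (hid : ∀ a, .fml (.pos a) ∈ Q → .fml (.neg a) ∉ Q)
    (hbox : ∀ A, .fml (.box A) ∈ Q → ∃ t : KripkeTree, ¬ A.Eval t ∧
      ∀ B, .fml (.dia B) ∈ Q → ¬ B.Eval t ∧ ¬ (Formula.dia B).Eval t)
    (hnest : ∀ Δ, .nest Δ ∈ Q → ∃ t : KripkeTree, ¬ evalSeq Δ t ∧
      ∀ B, .fml (.dia B) ∈ Q → ¬ B.Eval t ∧ ¬ (Formula.dia B).Eval t) : Refuted Q := by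
  choose f hf hf' using hbox
  choose g hg hg' using hnest
  refine ⟨.node (fun a => .fml (.neg a) ∈ Q)
    ({A // SeqElem.fml (.box A) ∈ Q} ⊕ {Δ // SeqElem.nest Δ ∈ Q})
    (Sum.elim (fun A => f A.1 A.2) (fun Δ => g Δ.1 Δ.2)), fun e he => ?_⟩
  cases e with
  | nest Δ =>
    intro h
    rw [SeqElem.Eval] at h
    exact hg Δ he (h (.inr ⟨Δ, he⟩)).1
  | fml A =>
    rw [SeqElem.Eval]
    cases A with
    | pos a => exact hid a he
    | neg a => exact fun h => h he
    | and A B => exact (hQ _ he).elim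
    | or A B => exact (hQ _ he).elim
    | box A => exact fun h => hf A he (h (.inl ⟨A, he⟩)).1
    | dia B =>
      refine fun h => h ?_
      rintro (⟨A, hA⟩ | ⟨Δ, hΔ⟩)
      · exact ⟨(hf' A hA B he).1, not_not.1 (hf' A hA B he).2⟩
      · exact ⟨(hg' Δ hΔ B he).1, not_not.1 (hg' Δ hΔ B he).2⟩

open Classical in
/-- Proof search: a sequent is derivable or has a countermodel. Here `Q` collects the elements
at the root which need no further propositional decomposition. -/
theorem stronglyDeriv_or_refuted (n : ℕ) (F : Finset Formula) (Q W : Sequent)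
    (hn : ∀ Δ, .nest Δ ∈ Q ++ W → sizeOf Δ < n)
    (hF : ∀ A, .fml A ∈ Q ++ W → A.modalBodies ⊆ F)
    (hQ : ∀ A, .fml A ∈ Q → A.Stable) : StronglyDeriv Q W ∨ Refuted (Q ++ W) := by
  have store (e : SeqElem) (W' : Sequent) (hW : W = e :: W')
      (he : ∀ A, e = .fml A → A.Stable) : StronglyDeriv Q W ∨ Refuted (Q ++ W) := by
    subst hW
    have hmem (x : SeqElem) : x ∈ e :: Q ++ W' ↔ x ∈ Q ++ e :: W' :=
      List.perm_middle.symm.mem_iff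
    have hcard : (F.filter fun B => .fml (.dia B) ∉ e :: Q).card ≤
        (F.filter fun B => .fml (.dia B) ∉ Q).card :=
      Finset.card_le_card (Finset.monotone_filter_right _
        fun B _ hB h => hB (List.mem_cons_of_mem _ h))
    have hw := e.weight_pos
    refine (stronglyDeriv_or_refuted n F (e :: Q) W' (fun Δ h => hn Δ ((hmem _).1 h))
      (fun A h => hF A ((hmem _).1 h)) ?_).imp StronglyDeriv.store ?_
    · intro A hA
      rcases List.mem_cons.1 hA with h | h
      · exact he A h.symm
      · exact hQ A h
    · exact fun ⟨t, ht⟩ => ⟨t, fun x hx => ht x ((hmem x).2 hx)⟩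
  match W with
  | .nest Δ :: W' => exact store _ _ rfl (by simp)
  | .fml (.pos a) :: W' => exact store _ _ rfl (by rintro _ ⟨⟩; trivial)
  | .fml (.neg a) :: W' => exact store _ _ rfl (by rintro _ ⟨⟩; trivial)
  | .fml (.box A) :: W' => exact store _ _ rfl (by rintro _ ⟨⟩; trivial)
  | .fml (.dia A) :: W' => exact store _ _ rfl (by rintro _ ⟨⟩; trivial)
  | .fml (.and A B) :: W' =>
    clear store
    have hAB := hF (.and A B) (by simp)
    simp only [Formula.modalBodies, Finset.union_subset_iff] at hAB
    rcases stronglyDeriv_or_refuted n F Q (.fml A :: W') (by simpa using hn)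
      (by simp only [List.mem_append, List.mem_cons, SeqElem.fml.injEq] at hF ⊢; grind) hQ with hA | hA
    · rcases stronglyDeriv_or_refuted n F Q (.fml B :: W') (by simpa using hn)
        (by simp only [List.mem_append, List.mem_cons, SeqElem.fml.injEq] at hF ⊢; grind) hQ with hB | hB
      · exact .inl (hA.and hB)
      · refine .inr (hB.of_cons fun t => ?_)
        simp +contextual [SeqElem.Eval, Formula.Eval]
    · refine .inr (hA.of_cons fun t => ?_)
      simp +contextual [SeqElem.Eval, Formula.Eval]
  | .fml (.or A B) :: W' =>
    clear store
    have hAB := hF (.or A B) (by simp)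
    simp only [Formula.modalBodies, Finset.union_subset_iff] at hAB
    refine (stronglyDeriv_or_refuted n F Q (.fml A :: .fml B :: W') (by simpa using hn)
      (by simp only [List.mem_append, List.mem_cons, SeqElem.fml.injEq] at hF ⊢; grind) hQ).imp
      StronglyDeriv.or fun h => h.of_cons fun t => ?_
    simp +contextual [SeqElem.Eval, Formula.Eval]
  | [] =>
    clear store
    simp only [List.append_nil] at hn hF ⊢
    refine or_iff_not_imp_left.2 fun hQd => refuted_of_stable hQ ?_ ?_ ?_
    · exact fun a h₁ h₂ => hQd (.of_pos_neg h₁ h₂)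
    · intro A hA
      have hnew : .fml (.dia A.negate) ∉ Q := fun h => hQd (.of_box_dia hA h)
      have hAF : A.negate ∈ F ∧ (Formula.dia A.negate).modalBodies ⊆ F ∧ A.modalBodies ⊆ F := by
        have h := hF _ hA
        refine ⟨h (by simp [Formula.modalBodies]), ?_, fun B hB => h ?_⟩
        · rwa [← Formula.modalBodies_negate, Formula.negate, Formula.negate_negate]
        · simp [Formula.modalBodies, hB]
      have hcard : (F.filter fun B => SeqElem.fml (.dia B) ∉
            SeqElem.fml (.dia A.negate) :: (diaBodies Q).map fun A => .fml (.dia A)).card <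
          (F.filter fun B => .fml (.dia B) ∉ Q).card := by
        refine Finset.card_lt_card ((Finset.ssubset_iff_of_subset ?_).2 ⟨A.negate, ?_, ?_⟩)
        · refine Finset.monotone_filter_right _ fun B _ hB h => hB ?_
          exact List.mem_cons_of_mem _ (List.mem_map.2 ⟨B, mem_diaBodies.2 h, rfl⟩)
        · exact Finset.mem_filter.2 ⟨hAF.1, hnew⟩
        · simp
      refine (stronglyDeriv_or_refuted n F
        (.fml (.dia A.negate) :: (diaBodies Q).map fun A => .fml (.dia A))
        ((diaBodies Q).map .fml ++ [.fml A]) (by simp) ?_ ?_).elim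
        (fun h => (hQd (.of_box hA h)).elim) ?_
      rotate_left 2
      · rintro ⟨t, ht⟩
        refine ⟨t, by simpa [SeqElem.Eval] using ht (.fml A) (by simp), fun B hB => ?_⟩
        have hB := mem_diaBodies.2 hB
        exact ⟨by simpa [SeqElem.Eval] using ht (.fml B) (by simp [hB]),
          by simpa [SeqElem.Eval] using ht (.fml (.dia B)) (by simp [hB])⟩
      · intro B hB
        have hdia (C : Formula) (hC : C ∈ diaBodies Q) :
            (Formula.dia C).modalBodies ⊆ F := hF _ (mem_diaBodies.1 hC)
        have hsub (C : Formula) (hC : C ∈ diaBodies Q) : C.modalBodies ⊆ F :=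
          Finset.subset_union_right.trans (hdia C hC)
        simp only [List.mem_append, List.mem_cons, List.mem_map, SeqElem.fml.injEq,
          List.not_mem_nil, or_false] at hB
        rcases hB with (rfl | ⟨C, hC, rfl⟩) | ⟨C, hC, rfl⟩ | rfl
        · exact hAF.2.1
        · exact hdia C hC
        · exact hsub C hC
        · exact hAF.2.2
      · intro B hB
        simp only [List.mem_cons, List.mem_map, SeqElem.fml.injEq] at hB
        rcases hB with rfl | ⟨C, -, rfl⟩ <;> trivial
    · intro Δ hΔ
      have hlt := hn Δ hΔ
      obtain ⟨G, hG⟩ := exists_modalBodies_subset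
        (((diaBodies Q).map fun A => .fml (.dia A)) ++ ((diaBodies Q).map .fml ++ Δ))
      refine (stronglyDeriv_or_refuted (sizeOf Δ) G
        ((diaBodies Q).map fun A => .fml (.dia A)) ((diaBodies Q).map .fml ++ Δ)
        ?_ hG ?_).elim (fun h => (hQd (.of_nest hΔ h)).elim) ?_
      rotate_left 2
      · rintro ⟨t, ht⟩
        refine ⟨t, fun h => ?_, fun B hB => ?_⟩
        · obtain ⟨e, he, h⟩ := evalSeq_iff.1 h
          exact ht e (by simp [he]) h
        · have hB := mem_diaBodies.2 hB
          exact ⟨by simpa [SeqElem.Eval] using ht (.fml B) (by simp [hB]),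
            by simpa [SeqElem.Eval] using ht (.fml (.dia B)) (by simp [hB])⟩
      · intro Δ' h
        have h : .nest Δ' ∈ Δ := by simpa using h
        have := List.sizeOf_lt_of_mem h
        simp only [SeqElem.nest.sizeOf_spec] at this
        omega
      · intro B hB
        obtain ⟨C, -, h⟩ := List.mem_map.1 hB
        cases h
        trivial
termination_by (n, (F.filter fun B => .fml (.dia B) ∉ Q).card, (W.map SeqElem.weight).sum)
decreasing_by
  · subst hW
    simp only [Prod.lex_def, List.map_cons, List.sum_cons]
    grind
  all_goals
    simp only [Prod.lex_def, List.map_cons, List.sum_cons, SeqElem.weight, Formula.size]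
    have := Formula.size_pos
    grind

/-- Cut-free completeness for well-founded trees. -/
theorem deriv_of_valid {Γ : Sequent} (h : ∀ t, evalSeq Γ t) : Deriv Γ := by
  obtain ⟨F, hF⟩ := exists_modalBodies_subset Γ
  have hn : ∀ Δ, .nest Δ ∈ [] ++ Γ → sizeOf Δ < sizeOf Γ := by
    intro Δ hΔ
    have := List.sizeOf_lt_of_mem (show SeqElem.nest Δ ∈ Γ from hΔ)
    simp only [SeqElem.nest.sizeOf_spec] at this
    omega
  rcases stronglyDeriv_or_refuted (sizeOf Γ) F [] Γ hn hF (by simp) with hd | ⟨t, ht⟩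
  · simpa [Ctx.fill] using hd (.hole []) [] (by simp)
  · obtain ⟨e, he, h⟩ := evalSeq_iff.1 (h t)
    exact (ht e he h).elim

/-- cut reduction for GL nested sequents. -/
theorem cut_reduction (c : Ctx) (A : Formula)
    (h1 : Deriv (c.fill [.fml A])) (h2 : Deriv (c.fill [.fml A.negate])) :
    Deriv (c.fill []) :=
  deriv_of_valid fun t => evalSeq_fill_cut c (h1.sound t) (h2.sound t)
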